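/- arXiv:1207.0391 — 2 statements merged into one kernel-verified Lean document; each statement's English description precedes it below -/
import Mathlib

section
/- (Łojasiewicz's inequality, polynomial case.) Let f, g ∈ ℝ[x₁,…,xₙ] be polynomials such that {x ∈ ℝⁿ : f(x) = 0} ⊆ {x ∈ ℝⁿ : g(x) = 0}. Then there exist integers m ≥ 1, ℓ ≥ 0 and a real constant C > 0 such that g(x)^{2m} ≤ C·(1 + ‖x‖²)^ℓ·|f(x)| for all x ∈ ℝⁿ, where ‖x‖² = x₁² + ⋯ + xₙ². -/
/-!
The inequality is deduced from a lower bound for positive polynomials (`pos_lower_bound`): if `F` is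
positive on all of `ℝⁿ`, then `F(x) (1 + ‖x‖²)^l ≥ c > 0` for some `c` and `l`. Applying this to
`F(t, x) = f(x)² + (t g(x) - 1)²`, which has no real zero because `f(x) = 0` forces `g(x) = 0`, at
the point `t = 1 / g(x)`, and clearing denominators gives the theorem.

For the lower bound, let `φ(r)` be the minimum of `F` on the sphere `‖x‖² = r`. By Lagrange
multipliers a minimizer lies on the algebraic set where the vectors `∇F(x)` and `x` are linearly
dependent (`critical_of_min`). On this set the functions `F` and `‖x‖²` satisfy a fixed nontrivial
polynomial relation `Q(F, ‖x‖²) = 0` (`exists_elim`); this is an algebraic form of the Sard theorem.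
Indeed, let `L` be the function field of an irreducible component. If `F` and `‖x‖²` were
algebraically independent over `ℝ` in `L`, there would be an `ℝ`-derivation of `L` with
`D F = 1` and `D ‖x‖² = 0` (`exists_derivation`), but the vanishing of the minors of `(∇F, x)`
makes `D F` vanish with `D ‖x‖²` (`exists_mem_prime`).

So `Q(φ(r), r) = 0` with `φ(r) > 0`. After dividing `Q` by a power of its first variable, its
constant term is a nonzero polynomial in `r`, bounded away from zero for large `r`, which bounds
`φ(r)` below by a negative power of `1 + r` (`small_root_bound`). Bounded `r` is handled by
compactness.
-/

open MvPolynomial TensorProduct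

/-! ### Growth and differentiability of polynomial functions -/

lemma abs_eval_le {n : ℕ} (p : MvPolynomial (Fin n) ℝ) :
    ∃ (C : ℝ) (l : ℕ), 0 < C ∧ ∀ x : Fin n → ℝ, |eval x p| ≤ C * (1 + ∑ i, x i ^ 2) ^ l := by
  have hB : ∀ x : Fin n → ℝ, 1 ≤ 1 + ∑ i, x i ^ 2 := fun x =>
    le_add_of_nonneg_right (Finset.sum_nonneg fun i _ => sq_nonneg _)
  induction p using MvPolynomial.induction_on with
  | C a => exact ⟨|a| + 1, 0, by positivity, fun x => by simp⟩
  | add p q hp hq =>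
    obtain ⟨C, l, hC, h⟩ := hp
    obtain ⟨C', l', hC', h'⟩ := hq
    refine ⟨C + C', l + l', by positivity, fun x => ?_⟩
    have h1 : (1 + ∑ i, x i ^ 2) ^ l ≤ (1 + ∑ i, x i ^ 2) ^ (l + l') :=
      pow_le_pow_right₀ (hB x) (by omega)
    have h2 : (1 + ∑ i, x i ^ 2) ^ l' ≤ (1 + ∑ i, x i ^ 2) ^ (l + l') :=
      pow_le_pow_right₀ (hB x) (by omega)
    rw [map_add, add_mul]
    refine (abs_add_le _ _).trans (add_le_add ((h x).trans ?_) ((h' x).trans ?_)) <;> gcongr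
  | mul_X p i hp =>
    obtain ⟨C, l, hC, h⟩ := hp
    refine ⟨C, l + 1, hC, fun x => ?_⟩
    have h1 : x i ^ 2 ≤ ∑ i, x i ^ 2 :=
      Finset.single_le_sum (f := fun i => x i ^ 2) (fun i _ => sq_nonneg _) (Finset.mem_univ i)
    have h2 : |x i| ≤ 1 + ∑ i, x i ^ 2 := by
      rw [← sq_abs] at h1
      nlinarith [sq_nonneg (|x i| - 1), hB x]
    rw [map_mul, eval_X, abs_mul, pow_succ, ← mul_assoc]
    exact mul_le_mul (h x) h2 (abs_nonneg _) ((abs_nonneg _).trans (h x))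

lemma hasStrictFDerivAt_eval {n : ℕ} (p : MvPolynomial (Fin n) ℝ) (x : Fin n → ℝ) :
    HasStrictFDerivAt (fun y : Fin n → ℝ => eval y p)
      (∑ i, eval x (pderiv i p) • (ContinuousLinearMap.proj i : (Fin n → ℝ) →L[ℝ] ℝ)) x := by
  induction p using MvPolynomial.induction_on with
  | C a => simpa using hasStrictFDerivAt_const a x
  | add p q hp hq =>
    simp only [map_add, add_smul, Finset.sum_add_distrib]
    exact hp.add hq
  | mul_X p i hp =>
    have h := hp.mul (ContinuousLinearMap.proj (R := ℝ) (φ := fun _ : Fin n => ℝ) i).hasStrictFDerivAt (x := x)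
    simp only [map_mul, eval_X]
    refine h.congr_fderiv ?_
    ext v
    simp [pderiv_X, Pi.single_apply, add_mul, Finset.sum_add_distrib, Finset.mul_sum,
      apply_ite, mul_assoc]

/-! ### The relation between `F` and `‖x‖²` on the critical set -/

/-- Derivations with prescribed values on two algebraically independent elements of a finitely
generated field extension `L` of `ℝ`. In characteristic zero `L` is formally smooth over the
polynomial ring `ℝ[v₀, v₁]`, so `L ⊗ Ω[ℝ[v₀, v₁]⁄ℝ]` embeds into `Ω[L⁄ℝ]` and linear
functionals extend. -/
lemma exists_derivation {L : Type} [Field L] [Algebra ℝ L] [Algebra.EssFiniteType ℝ L]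
    (v : Fin 2 → L) (hv : AlgebraicIndependent ℝ v) (w : Fin 2 → L) :
    ∃ D : Derivation ℝ L L, ∀ i, D (v i) = w i := by
  let : Algebra (MvPolynomial (Fin 2) ℝ) L := (aeval v).toAlgebra
  have hX : ∀ p, algebraMap (MvPolynomial (Fin 2) ℝ) L p = aeval v p := fun p => rfl
  have : IsScalarTower ℝ (MvPolynomial (Fin 2) ℝ) L := .of_algebraMap_eq fun r => by simp [hX]
  have : FaithfulSMul (MvPolynomial (Fin 2) ℝ) L :=
    (faithfulSMul_iff_algebraMap_injective _ _).2 hv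
  let := FractionRing.liftAlgebra (MvPolynomial (Fin 2) ℝ) L
  have : Algebra.EssFiniteType (FractionRing (MvPolynomial (Fin 2) ℝ)) L :=
    .of_comp ℝ _ _
  have : CharZero (FractionRing (MvPolynomial (Fin 2) ℝ)) := algebraRat.charZero _
  have : Algebra.FormallySmooth (FractionRing (MvPolynomial (Fin 2) ℝ)) L := inferInstance
  have : Algebra.FormallySmooth (MvPolynomial (Fin 2) ℝ) (FractionRing (MvPolynomial (Fin 2) ℝ)) :=
    .of_isLocalization (nonZeroDivisors _)
  have : Algebra.FormallySmooth (MvPolynomial (Fin 2) ℝ) L :=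
    .comp _ (FractionRing (MvPolynomial (Fin 2) ℝ)) _
  have hinj : Function.Injective (KaehlerDifferential.mapBaseChange ℝ (MvPolynomial (Fin 2) ℝ) L) := by
    rw [injective_iff_map_eq_zero]
    intro x hx
    obtain ⟨y, rfl⟩ := (Algebra.H1Cotangent.exact_δ_mapBaseChange ℝ (MvPolynomial (Fin 2) ℝ) L x).1 hx
    rw [Subsingleton.elim y 0, map_zero]
  obtain ⟨r, hr⟩ := LinearMap.exists_leftInverse_of_injective _ (LinearMap.ker_eq_bot.2 hinj)
  let φ := ((mkDerivation ℝ w).liftKaehlerDifferential.liftBaseChange L).comp r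
  refine ⟨φ.compDer (KaehlerDifferential.D ℝ L), fun i => ?_⟩
  have h1 : KaehlerDifferential.D ℝ L (v i) =
      KaehlerDifferential.mapBaseChange ℝ (MvPolynomial (Fin 2) ℝ) L
        (1 ⊗ₜ KaehlerDifferential.D ℝ _ (X i)) := by
    simp [hX]
  have h2 := LinearMap.congr_fun hr (1 ⊗ₜ KaehlerDifferential.D ℝ (MvPolynomial (Fin 2) ℝ) (X i))
  rw [LinearMap.comp_apply, ← h1] at h2
  simp [φ, h2, mkDerivation_X]

/-- On an irreducible subvariety where the `2 × 2` minors of `(∇F, x)` vanish, `F` and `‖x‖²` are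
algebraically dependent. -/
lemma exists_mem_prime {n : ℕ} (F : MvPolynomial (Fin n) ℝ) (p : Ideal (MvPolynomial (Fin n) ℝ))
    [p.IsPrime] (hp : ∀ i j, pderiv i F * X j - pderiv j F * X i ∈ p) :
    ∃ Q : MvPolynomial (Fin 2) ℝ, Q ≠ 0 ∧ aeval ![F, ∑ i, X i ^ 2] Q ∈ p := by
  let L := FractionRing (MvPolynomial (Fin n) ℝ ⧸ p)
  let π : MvPolynomial (Fin n) ℝ →ₐ[ℝ] L :=
    (IsScalarTower.toAlgHom ℝ (MvPolynomial (Fin n) ℝ ⧸ p) L).comp (Ideal.Quotient.mkₐ ℝ p)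
  have hπ : ∀ q, π q = 0 ↔ q ∈ p := fun q => by
    rw [← Ideal.Quotient.eq_zero_iff_mem]
    exact (FaithfulSMul.algebraMap_eq_zero_iff (MvPolynomial (Fin n) ℝ ⧸ p) L)
  have : Algebra.EssFiniteType ℝ L := .comp ℝ (MvPolynomial (Fin n) ℝ ⧸ p) L
  by_cases hv : AlgebraicIndependent ℝ ![π F, π (∑ i, X i ^ 2)]
  · exfalso
    obtain ⟨D, hD⟩ := exists_derivation _ hv ![1, 0]
    have hD0 : D (π F) = 1 := hD 0
    have hD1 : D (π (∑ i, X i ^ 2)) = 0 := hD 1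
    have chain : ∀ q, D (π q) = ∑ i, π (pderiv i q) * D (π (X i)) := by
      intro q
      induction q using MvPolynomial.induction_on with
      | C a =>
        have : π (C a) = algebraMap ℝ L a := π.commutes a
        rw [this]; simp
      | add p q hp hq => simp [hp, hq, add_mul, Finset.sum_add_distrib]
      | mul_X q i hq =>
        simp [hq, pderiv_X, Pi.single_apply, add_mul, Finset.sum_add_distrib, apply_ite, mul_assoc]
        exact Finset.mul_sum _ _ _
    have hsum : ∑ i, π (X i) * D (π (X i)) = 0 := by
      have h2 : (2 : L) * ∑ i, π (X i) * D (π (X i)) = 0 := by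
        rw [← hD1, map_sum, map_sum, Finset.mul_sum]
        refine Finset.sum_congr rfl fun i _ => ?_
        rw [map_pow, pow_two, D.leibniz, smul_eq_mul, two_mul]
      have : CharZero L := algebraRat.charZero _
      exact (mul_eq_zero.1 h2).resolve_left two_ne_zero
    have hminor : ∀ i j, π (pderiv i F) * π (X j) = π (pderiv j F) * π (X i) := fun i j => by
      have := (hπ _).2 (hp i j)
      rwa [map_sub, map_mul, map_mul, sub_eq_zero] at this
    -- `x_j D F = ∑ ∂ᵢF x_j D xᵢ = ∂ⱼF ∑ xᵢ D xᵢ = 0` while `D F = 1`, so every `x_j` is zero in `L`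
    have hX : ∀ j, π (X j) = 0 := fun j => by
      have h1 := chain F
      rw [hD0] at h1
      calc π (X j) = π (X j) * ∑ i, π (pderiv i F) * D (π (X i)) := by rw [← h1, mul_one]
        _ = π (pderiv j F) * ∑ i, π (X i) * D (π (X i)) := by
          rw [Finset.mul_sum, Finset.mul_sum]
          refine Finset.sum_congr rfl fun i _ => ?_
          linear_combination D (π (X i)) * hminor i j
        _ = 0 := by rw [hsum, mul_zero]
    have h0 : π (∑ i, X i ^ 2) = 0 := by simp [hX]
    exact hv.ne_zero 1 (by simpa using h0)
  · rw [algebraicIndependent_iff] at hv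
    push Not at hv
    obtain ⟨Q, hQ, hQ0⟩ := hv
    refine ⟨Q, hQ0, (hπ _).1 ?_⟩
    rw [← hQ, ← AlgHom.comp_apply]
    congr 1
    apply MvPolynomial.algHom_ext
    intro i
    fin_cases i <;> simp

/-- A single nonzero `Q` with `Q(F(x), ‖x‖²) = 0` at all real points `x` where `∇F(x)` and `x` are
linearly dependent: the product of the relations on the finitely many irreducible components. -/
lemma exists_elim {n : ℕ} (F : MvPolynomial (Fin n) ℝ) :
    ∃ Q : MvPolynomial (Fin 2) ℝ, Q ≠ 0 ∧ ∀ x : Fin n → ℝ,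
      (∀ i j, eval x (pderiv i F) * x j = eval x (pderiv j F) * x i) →
        eval ![eval x F, ∑ i, x i ^ 2] Q = 0 := by
  let I : Ideal (MvPolynomial (Fin n) ℝ) :=
    Ideal.span (Set.range fun ij : Fin n × Fin n =>
      pderiv ij.1 F * X ij.2 - pderiv ij.2 F * X ij.1)
  have key : ∀ p : I.minimalPrimes, ∃ Q : MvPolynomial (Fin 2) ℝ, Q ≠ 0 ∧
      aeval ![F, ∑ i, X i ^ 2] Q ∈ p.1 := fun p => by
    have := p.2.1.1
    exact exists_mem_prime F p.1 fun i j => p.2.1.2 (Ideal.subset_span ⟨(i, j), rfl⟩)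
  choose Q hQ0 hQ using key
  have := (I.finite_minimalPrimes_of_isNoetherianRing).fintype
  refine ⟨∏ p, Q p, Finset.prod_ne_zero_iff.2 fun p _ => hQ0 p, fun x hx => ?_⟩
  have hmem : aeval ![F, ∑ i, X i ^ 2] (∏ p, Q p) ∈ I.radical := by
    rw [← Ideal.sInf_minimalPrimes, Ideal.mem_sInf]
    intro p hp
    rw [map_prod]
    have hdvd := Finset.dvd_prod_of_mem (fun p => aeval ![F, ∑ i, X i ^ 2] (Q p))
      (Finset.mem_univ (⟨p, hp⟩ : I.minimalPrimes))
    exact p.mem_of_dvd hdvd (hQ ⟨p, hp⟩)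
  have hker : I.radical ≤ RingHom.ker (eval x) := by
    have := RingHom.ker_isPrime (eval x)
    refine (Ideal.IsPrime.radical_le_iff this).2 (Ideal.span_le.2 ?_)
    rintro _ ⟨⟨i, j⟩, rfl⟩
    simp [hx i j]
  have h0 := (RingHom.mem_ker).1 (hker hmem)
  rw [← h0]
  have : ∀ q : MvPolynomial (Fin 2) ℝ, (aeval ![eval x F, ∑ i, x i ^ 2]) q =
      ((aeval x).comp (aeval ![F, ∑ i, X i ^ 2])) q := fun q => by
    congr 1
    apply MvPolynomial.algHom_ext
    intro i
    fin_cases i <;> simp [aeval_eq_eval]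
  simpa [aeval_eq_eval] using this (∏ p, Q p)

/-! ### Lower bound for small roots of a bivariate relation -/

/-- The identification of `ℝ[s, r]` with `ℝ[r][s]`: variable `0` becomes the outer variable. -/
noncomputable def bivariateEquiv : MvPolynomial (Fin 2) ℝ ≃ₐ[ℝ] Polynomial (Polynomial ℝ) :=
  (finSuccEquiv ℝ 1).trans (Polynomial.mapAlgEquiv (uniqueAlgEquiv ℝ (Fin 1)))

lemma evalEval_bivariateEquiv (Q : MvPolynomial (Fin 2) ℝ) (r s : ℝ) :
    (bivariateEquiv Q).evalEval r s = eval ![s, r] Q := by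
  induction Q using MvPolynomial.induction_on with
  | C a => simp [bivariateEquiv, finSuccEquiv_apply, uniqueAlgEquiv, Polynomial.evalEval]
  | add p q hp hq => simp [hp, hq]
  | mul_X p i hp =>
    rw [map_mul, Polynomial.evalEval_mul, hp, map_mul, eval_X]
    congr 1
    fin_cases i
    · simp [bivariateEquiv, finSuccEquiv_apply, Polynomial.evalEval]
    · change (bivariateEquiv (X (Fin.succ 0))).evalEval r s = r
      rw [bivariateEquiv, AlgEquiv.trans_apply, finSuccEquiv_X_succ]
      simp [uniqueAlgEquiv, Polynomial.evalEval]

lemma abs_eval_lower (a : Polynomial ℝ) (ha : a ≠ 0) :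
    ∃ (c R : ℝ), 0 < c ∧ ∀ r, R ≤ r → c ≤ |a.eval r| := by
  by_cases h : 0 < a.degree
  · obtain ⟨R, hR⟩ := Filter.eventually_atTop.1
      ((a.abs_tendsto_atTop h).eventually_ge_atTop 1)
    exact ⟨1, R, one_pos, hR⟩
  · rw [Polynomial.eq_C_of_degree_le_zero (not_lt.1 h)] at ha ⊢
    refine ⟨|a.coeff 0|, 0, abs_pos.2 fun h0 => ha (by simp [h0]), fun r _ => by simp⟩

/-- A positive root `s ≤ 1` of `Q(·, r)` is at least a fixed negative power of `1 + r`, for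
large `r`: after removing the factors `s` from `Q`, the equation reads `a(r) + s b(s, r) = 0` with
`a ≠ 0`. -/
lemma small_root_bound (Q : MvPolynomial (Fin 2) ℝ) (hQ : Q ≠ 0) :
    ∃ (c R : ℝ) (l : ℕ), 0 < c ∧ ∀ r s, R ≤ r → 0 ≤ r → 0 < s → s ≤ 1 → eval ![s, r] Q = 0 →
      c ≤ s * (1 + r) ^ l := by
  have hq : bivariateEquiv Q ≠ 0 := by simpa using hQ
  obtain ⟨q, hq1, hq2⟩ :=
    Polynomial.exists_eq_pow_rootMultiplicity_mul_and_not_dvd (bivariateEquiv Q) hq 0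
  rw [map_zero, sub_zero] at hq1 hq2
  have ha : q.coeff 0 ≠ 0 := fun h => hq2 (Polynomial.X_dvd_iff.2 h)
  obtain ⟨c, R, hc, hR⟩ := abs_eval_lower _ ha
  obtain ⟨C, l, hC, hb⟩ := abs_eval_le (bivariateEquiv.symm q.divX)
  refine ⟨c / (C * 2 ^ l), R, 2 * l, by positivity, fun r s hr hr0 hs hs1 h0 => ?_⟩
  rw [← evalEval_bivariateEquiv, hq1, Polynomial.evalEval_mul, Polynomial.evalEval_pow,
    Polynomial.evalEval_X] at h0
  have h1 := (mul_eq_zero.1 h0).resolve_left (pow_ne_zero _ hs.ne')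
  rw [← q.divX_mul_X_add, Polynomial.evalEval_add, Polynomial.evalEval_mul,
    Polynomial.evalEval_X, Polynomial.evalEval_C] at h1
  have h2 := hb ![s, r]
  rw [← evalEval_bivariateEquiv, AlgEquiv.apply_symm_apply] at h2
  have h3 : 1 + ∑ i, (![s, r] i) ^ 2 ≤ 2 * (1 + r) ^ 2 := by
    simp only [Fin.sum_univ_two, Matrix.cons_val_zero, Matrix.cons_val_one]
    nlinarith
  have h4 : |q.divX.evalEval r s| ≤ C * (2 * (1 + r) ^ 2) ^ l :=
    h2.trans (by gcongr)
  have h5 : c ≤ s * (C * (2 * (1 + r) ^ 2) ^ l) := by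
    calc c ≤ |(q.coeff 0).eval r| := hR r hr
      _ = |q.divX.evalEval r s| * s := by
        rw [← abs_of_pos hs, ← abs_mul, ← abs_neg, abs_of_pos hs]; congr 1; linarith
      _ ≤ _ := by rw [mul_comm]; gcongr
  rw [div_le_iff₀ (by positivity)]
  calc c ≤ _ := h5
    _ = _ := by rw [mul_pow, ← pow_mul]; ring

/-! ### Positive polynomials decay at most polynomially -/

lemma isCompact_ball {n : ℕ} (R : ℝ) : IsCompact {x : Fin n → ℝ | ∑ i, x i ^ 2 ≤ R} := by
  refine Metric.isCompact_of_isClosed_isBounded (isClosed_le (by fun_prop) continuous_const) ?_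
  refine Metric.isBounded_closedBall (x := (0 : Fin n → ℝ)) (r := 1 + |R|) |>.subset fun x hx => ?_
  rw [mem_closedBall_zero_iff, pi_norm_le_iff_of_nonneg (by positivity)]
  intro i
  have h1 : x i ^ 2 ≤ ∑ i, x i ^ 2 :=
    Finset.single_le_sum (f := fun i => x i ^ 2) (fun i _ => sq_nonneg _) (Finset.mem_univ i)
  have h2 : x i ^ 2 ≤ R := h1.trans hx
  rw [Real.norm_eq_abs, abs_le]
  constructor <;> nlinarith [le_abs_self R]

/-- At a minimizer of `F` on a sphere centred at the origin, `∇F(y)` and `y` are linearly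
dependent. -/
lemma critical_of_min {n : ℕ} (F : MvPolynomial (Fin n) ℝ) (y : Fin n → ℝ)
    (hy : IsMinOn (fun x => eval x F) {x | ∑ i, x i ^ 2 = ∑ i, y i ^ 2} y) (i j : Fin n) :
    eval y (pderiv i F) * y j = eval y (pderiv j F) * y i := by
  have hN := hasStrictFDerivAt_eval (∑ i, X i ^ 2 : MvPolynomial (Fin n) ℝ) y
  have hmin : IsLocalExtrOn (fun x => eval x F)
      {x | eval x (∑ i, X i ^ 2 : MvPolynomial (Fin n) ℝ) =
        eval y (∑ i, X i ^ 2 : MvPolynomial (Fin n) ℝ)} y := by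
    simp only [map_sum, map_pow, eval_X]
    exact Or.inl hy.localize
  obtain ⟨a, b, hab, h⟩ :=
    hmin.exists_multipliers_of_hasStrictFDerivAt_1d hN (hasStrictFDerivAt_eval F y)
  have hk : ∀ k, a * (2 * y k) + b * eval y (pderiv k F) = 0 := fun k => by
    have := DFunLike.congr_fun h (Pi.single k 1)
    simpa [Pi.single_apply, pderiv_X, apply_ite, Derivation.leibniz_pow] using this
  by_cases hb : b = 0
  · subst hb
    have ha : a ≠ 0 := fun ha => hab (by simp [ha])
    have h0 : ∀ k, y k = 0 := fun k => by simpa [ha] using hk k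
    simp [h0]
  · apply mul_left_cancel₀ hb
    linear_combination y j * hk i - y i * hk j

/-- A polynomial that is positive on `ℝⁿ` is bounded below by `c (1 + ‖x‖²)^(-l)` with `c > 0`. -/
lemma pos_lower_bound {n : ℕ} (F : MvPolynomial (Fin n) ℝ) (hF : ∀ x, 0 < eval x F) :
    ∃ (c : ℝ) (l : ℕ), 0 < c ∧ ∀ x : Fin n → ℝ, c ≤ eval x F * (1 + ∑ i, x i ^ 2) ^ l := by
  obtain ⟨Q, hQ0, hQ⟩ := exists_elim F
  obtain ⟨c, R, l, hc, hb⟩ := small_root_bound Q hQ0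
  have hcont : Continuous fun x : Fin n → ℝ => eval x F := MvPolynomial.continuous_eval F
  obtain ⟨c', hc', hb'⟩ : ∃ c' : ℝ, 0 < c' ∧ ∀ x : Fin n → ℝ, ∑ i, x i ^ 2 ≤ R → c' ≤ eval x F := by
    rcases Set.eq_empty_or_nonempty {x : Fin n → ℝ | ∑ i, x i ^ 2 ≤ R} with he | hne
    · exact ⟨1, one_pos, fun x hx => absurd hx (Set.eq_empty_iff_forall_notMem.1 he x)⟩
    · obtain ⟨z, -, hz⟩ := (isCompact_ball R).exists_isMinOn hne hcont.continuousOn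
      exact ⟨eval z F, hF z, fun x hx => hz hx⟩
  refine ⟨min c (min c' 1), l, by positivity, fun x => ?_⟩
  have hN : 0 ≤ ∑ i, x i ^ 2 := Finset.sum_nonneg fun i _ => sq_nonneg _
  have hpow : 1 ≤ (1 + ∑ i, x i ^ 2) ^ l := one_le_pow₀ (by linarith)
  have easy : ∀ d : ℝ, d ≤ eval x F → d ≤ eval x F * (1 + ∑ i, x i ^ 2) ^ l := fun d hd =>
    hd.trans (le_mul_of_one_le_right (hF x).le hpow)
  rcases le_total (∑ i, x i ^ 2) R with hxR | hxR
  · exact ((min_le_right _ _).trans (min_le_left _ _)).trans (easy _ (hb' x hxR))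
  rcases le_total 1 (eval x F) with h1 | h1
  · exact ((min_le_right _ _).trans (min_le_right _ _)).trans (easy _ h1)
  have hcomp : IsCompact {z : Fin n → ℝ | ∑ i, z i ^ 2 = ∑ i, x i ^ 2} :=
    (isCompact_ball (∑ i, x i ^ 2)).of_isClosed_subset
      (isClosed_eq (by fun_prop) continuous_const) fun z hz => le_of_eq hz
  obtain ⟨y, hyS, hy⟩ := hcomp.exists_isMinOn ⟨x, rfl⟩ hcont.continuousOn
  have hyS' : ∑ i, y i ^ 2 = ∑ i, x i ^ 2 := hyS
  have hyx : eval y F ≤ eval x F := hy rfl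
  have hcrit := hQ y (critical_of_min F y (by rw [hyS']; exact hy))
  rw [hyS'] at hcrit
  calc min c (min c' 1) ≤ c := min_le_left _ _
    _ ≤ eval y F * (1 + ∑ i, x i ^ 2) ^ l := hb _ _ hxR hN (hF y) (hyx.trans h1) hcrit
    _ ≤ _ := by gcongr

/-! ### The Łojasiewicz inequality -/

theorem stmt_12 (n : ℕ) (f g : MvPolynomial (Fin n) ℝ)
    (h : {x : Fin n → ℝ | MvPolynomial.eval x f = 0} ⊆
         {x : Fin n → ℝ | MvPolynomial.eval x g = 0}) :
    ∃ (m : ℕ) (_ : 1 ≤ m) (l : ℕ) (C : ℝ), 0 < C ∧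
      ∀ x : Fin n → ℝ,
        (MvPolynomial.eval x g) ^ (2 * m) ≤
          C * (1 + ∑ i, (x i) ^ 2) ^ l * |MvPolynomial.eval x f| := by
  -- variable `0` is the additional variable `t`
  let F : MvPolynomial (Fin (n + 1)) ℝ :=
    rename Fin.succ f ^ 2 + (X 0 * rename Fin.succ g - 1) ^ 2
  have hev : ∀ (t : ℝ) (x : Fin n → ℝ), eval (Fin.cons t x : Fin (n + 1) → ℝ) F =
      eval x f ^ 2 + (t * eval x g - 1) ^ 2 := fun t x => by
    simp [F, eval_rename, Function.comp_def]
  have hF : ∀ z, 0 < eval z F := fun z => by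
    rw [← Fin.cons_self_tail z, hev]
    by_cases hf : eval (Fin.tail z) f = 0
    · have hg : eval (Fin.tail z) g = 0 := h hf
      simp [hf, hg]
    · positivity
  obtain ⟨c, m, hc, hlow⟩ := pos_lower_bound F hF
  obtain ⟨A, a, hA, hfA⟩ := abs_eval_le f
  obtain ⟨B, b, hB, hgB⟩ := abs_eval_le (g ^ 2)
  refine ⟨m + 1, by omega, (b + 1) * m + b + a, (B + 1) ^ m * B * A / c, by positivity, fun x => ?_⟩
  have hN : 0 ≤ ∑ i, x i ^ 2 := Finset.sum_nonneg fun i _ => sq_nonneg _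
  set N := 1 + ∑ i, x i ^ 2 with hNdef
  have hN1 : 1 ≤ N := by linarith
  have hfx := hfA x
  have hgx := hgB x
  rw [map_pow, abs_of_nonneg (sq_nonneg _)] at hgx
  rcases eq_or_ne (eval x g) 0 with hg | hg
  · rw [hg, zero_pow (by omega)]
    positivity
  have h1 := hlow (Fin.cons (eval x g)⁻¹ x)
  rw [hev, inv_mul_cancel₀ hg, Fin.sum_univ_succ] at h1
  simp only [Fin.cons_zero, Fin.cons_succ, sub_self] at h1
  have hgpos : 0 < eval x g ^ 2 := by positivity
  -- multiply the lower bound by `g(x)^(2m)`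
  have h2 : c * (eval x g ^ 2) ^ m ≤ eval x f ^ 2 * (1 + eval x g ^ 2 * N) ^ m := by
    calc c * (eval x g ^ 2) ^ m
        ≤ (eval x f ^ 2 + 0 ^ 2) * (1 + ((eval x g)⁻¹ ^ 2 + ∑ i, x i ^ 2)) ^ m
          * (eval x g ^ 2) ^ m := by gcongr
      _ = eval x f ^ 2 * (1 + eval x g ^ 2 * N) ^ m := by
        rw [mul_assoc, ← mul_pow, hNdef]
        congr 2
        · ring
        · field_simp
          ring
  have h3 : 1 + eval x g ^ 2 * N ≤ (B + 1) * N ^ (b + 1) := by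
    have : 1 ≤ N ^ (b + 1) := one_le_pow₀ hN1
    calc 1 + eval x g ^ 2 * N ≤ N ^ (b + 1) + B * N ^ b * N := by gcongr
      _ = _ := by ring
  have h4 : eval x f ^ 2 ≤ A * N ^ a * |eval x f| := by
    rw [← sq_abs, pow_two]; gcongr
  rw [div_mul_eq_mul_div, div_mul_eq_mul_div, le_div_iff₀ hc]
  calc eval x g ^ (2 * (m + 1)) * c = eval x g ^ 2 * (c * (eval x g ^ 2) ^ m) := by
        rw [pow_mul, pow_succ]; ring
    _ ≤ (B * N ^ b) * ((A * N ^ a * |eval x f|) * ((B + 1) * N ^ (b + 1)) ^ m) := by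
        refine mul_le_mul hgx (h2.trans ?_) (by positivity) (by positivity)
        gcongr
    _ = _ := by rw [mul_pow, ← pow_mul]; ring
end

section
/- Let A be a commutative ring and 𝔞 an ideal of A. Define √²𝔞 := {f ∈ A : there exists σ ∈ A which is a finite sum of squares with f² + σ ∈ 𝔞}, and define the real radical √ʳ𝔞 := {f ∈ A : there exist an integer m ≥ 1 and a finite sum of squares σ ∈ A with f^{2m} + σ ∈ 𝔞}. Then: (a) √²𝔞 is an ideal of A containing 𝔞; (b) √ʳ𝔞 equals the radical of the ideal √²𝔞; (c) if 𝔞 = √²𝔞 then 𝔞 is a radical ideal; and (d) 𝔞 = √ʳ𝔞 if and only if 𝔞 = √²𝔞. -/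
/-!
Write `S = {f | ∃ σ, IsSumSq σ ∧ f ^ 2 + σ ∈ a}`. Closure of `S` under addition is the parallelogram
identity `(f + g)² + ((f - g)² + 2σ + 2τ) = 2(f² + σ) + 2(g² + τ)`. The description of the real
radical as the radical of `S` is `f ^ (2 * m) = (f ^ m) ^ 2`. If `a = S`, then `f² ∈ a` gives `f ∈ a`
(take `σ = 0`), so `a` is radical, and the last equivalence follows.
-/

theorem stmt_18 {A : Type*} [CommRing A] (a : Ideal A) :
    (∃ I : Ideal A, (I : Set A) = {f : A | ∃ σ : A, IsSumSq σ ∧ f ^ 2 + σ ∈ a} ∧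
      (a : Set A) ⊆ {f : A | ∃ σ : A, IsSumSq σ ∧ f ^ 2 + σ ∈ a}) ∧
    {f : A | ∃ m : ℕ, 1 ≤ m ∧ ∃ σ : A, IsSumSq σ ∧ f ^ (2 * m) + σ ∈ a} =
      {f : A | ∃ k : ℕ, 1 ≤ k ∧ f ^ k ∈ {f : A | ∃ σ : A, IsSumSq σ ∧ f ^ 2 + σ ∈ a}} ∧
    ((a : Set A) = {f : A | ∃ σ : A, IsSumSq σ ∧ f ^ 2 + σ ∈ a} → a.radical = a) ∧
    ((a : Set A) = {f : A | ∃ m : ℕ, 1 ≤ m ∧ ∃ σ : A, IsSumSq σ ∧ f ^ (2 * m) + σ ∈ a} ↔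
      (a : Set A) = {f : A | ∃ σ : A, IsSumSq σ ∧ f ^ 2 + σ ∈ a}) := by
  have hsub : ∀ f ∈ a, ∃ σ : A, IsSumSq σ ∧ f ^ 2 + σ ∈ a := fun f hf =>
    ⟨0, IsSumSq.zero, by simpa using a.pow_mem_of_mem hf 2 two_pos⟩
  have hrad : (a : Set A) = {f : A | ∃ σ : A, IsSumSq σ ∧ f ^ 2 + σ ∈ a} → a.radical = a := by
    intro h
    refine Ideal.IsRadical.radical ((Ideal.isRadical_iff_pow_one_lt 2 one_lt_two).2 fun f hf => ?_)
    rw [← SetLike.mem_coe, h]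
    exact ⟨0, IsSumSq.zero, by simpa using hf⟩
  refine ⟨⟨{ carrier := {f : A | ∃ σ : A, IsSumSq σ ∧ f ^ 2 + σ ∈ a}
             zero_mem' := hsub 0 a.zero_mem
             add_mem' := ?_
             smul_mem' := ?_ }, rfl, hsub⟩, ?_, hrad, ?_, ?_⟩
  · rintro f g ⟨σ, hσ, hf⟩ ⟨τ, hτ, hg⟩
    refine ⟨(f - g) * (f - g) + ((σ + σ) + (τ + τ)),
      IsSumSq.sq_add _ ((hσ.add hσ).add (hτ.add hτ)), ?_⟩
    convert a.add_mem (a.mul_mem_left 2 hf) (a.mul_mem_left 2 hg) using 1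
    ring
  · rintro c f ⟨σ, hσ, hf⟩
    refine ⟨c * c * σ, (IsSumSq.mul_self c).mul hσ, ?_⟩
    convert a.mul_mem_left (c * c) hf using 1
    simp only [smul_eq_mul]
    ring
  · ext f
    simp only [Set.mem_ofPred_eq, ← pow_mul, mul_comm]
  · intro h
    refine Set.Subset.antisymm hsub ?_
    rintro f ⟨σ, hσ, hf⟩
    rw [h]
    exact ⟨1, le_rfl, σ, hσ, by simpa using hf⟩
  · intro h
    refine Set.Subset.antisymm (fun f hf => ?_) ?_
    · obtain ⟨σ, hσ, hf⟩ := hsub f hf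
      exact ⟨1, le_rfl, σ, hσ, by simpa using hf⟩
    · rintro f ⟨m, -, σ, hσ, hf⟩
      have hm : f ^ m ∈ a := by
        rw [← SetLike.mem_coe, h]
        exact ⟨σ, hσ, by rwa [← pow_mul, mul_comm m 2]⟩
      rw [← hrad h]
      exact ⟨m, hm⟩
end
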